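/- Let G be a graph on n vertices and k ≥ 5 an integer. The sum of the weights w(D) over all good k-tuples D of vertices of G is at most 1. -/

import Mathlib

open Finset
open scoped Classical

/-- Index transposition swapping 0 and 1. -/
def swap01 (i : ℕ) : ℕ := if i = 0 then 1 else if i = 1 then 0 else i

/-- `y 0, y 1, …, y (k-1)` is an induced cycle of length `k` in `G`. -/
def IsInducedCycle {V : Type*} (G : SimpleGraph V) (k : ℕ) (y : ℕ → V) : Prop :=
  (∀ i < k, ∀ j < k, y i = y j → i = j) ∧
  ∀ i < k, ∀ j < k, (G.Adj (y i) (y j) ↔ (i + 1) % k = j ∨ (j + 1) % k = i)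

/-- `y 0, y 1, …, y (m-1)` is an induced path on `m` vertices in `G`. -/
def IsInducedPath {V : Type*} (G : SimpleGraph V) (m : ℕ) (y : ℕ → V) : Prop :=
  (∀ i < m, ∀ j < m, y i = y j → i = j) ∧
  ∀ i < m, ∀ j < m, (G.Adj (y i) (y j) ↔ i + 1 = j ∨ j + 1 = i)

/-- `(z 0, …, z (k-1))` is a good k-tuple: `z 1, z 0, z 2, …, z (k-1)` is an induced cycle. -/
def IsGoodTuple {V : Type*} (G : SimpleGraph V) (k : ℕ) (z : ℕ → V) : Prop :=
  IsInducedCycle G k (fun i => z (swap01 i))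

/-- The sequence `z 1, z 0, z 2, …, z (i-2), x` of length `i`. -/
def extSeq {V : Type*} (z : ℕ → V) (i : ℕ) (x : V) : ℕ → V :=
  fun p => if p = i - 1 then x else z (swap01 p)

/-- The quantity `n_i` associated with the (prefix of the) tuple `z`. -/
noncomputable def nq {V : Type*} (G : SimpleGraph V) (k : ℕ) (z : ℕ → V) (i : ℕ) : ℕ :=
  if i = 1 then Nat.card V
  else if i = 2 then Nat.card {x : V // G.Adj (z 0) x}
  else if i = 3 then Nat.card {x : V // G.Adj (z 0) x ∧ ¬ G.Adj (z 1) x}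
  else if i < k then Nat.card {x : V // IsInducedPath G i (extSeq z i x)}
  else Nat.card {x : V // IsInducedCycle G k (extSeq z k x)}

/-- The weight `w(D) = ∏_{i=1}^k 1/n_i` of a tuple. -/
noncomputable def wt {V : Type*} (G : SimpleGraph V) (k : ℕ) (z : ℕ → V) : ℝ :=
  ∏ i ∈ Finset.Icc 1 k, ((nq G k z i : ℝ))⁻¹

/-- View a `Fin k`-tuple as an `ℕ`-indexed tuple. -/
def tupFun {V : Type*} {k : ℕ} (hk : 0 < k) (z : Fin k → V) : ℕ → V :=
  fun i => z ⟨i % k, Nat.mod_lt i hk⟩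

/-- The good tuple `D_j = (v_j, v_{j-1}, v_{j+1}, …, v_{j+k-2})` (0-indexed `j`, indices mod `k`). -/
def Dtup {V : Type*} (k : ℕ) (v : ℕ → V) (j : ℕ) : ℕ → V :=
  fun p => if p = 0 then v (j % k)
    else if p = 1 then v ((j + k - 1) % k)
    else v ((j + p - 1) % k)

lemma gen_aux {V : Type} [Fintype V] (S : ∀ i : ℕ, (Fin i → V) → Finset V) (m : ℕ) :
    ∑ z : Fin m → V, ∏ i : Fin m,
      (if z i ∈ S i (fun j => z (j.castLE i.2.le)) then
        ((#(S i (fun j => z (j.castLE i.2.le))) : ℝ))⁻¹ else 0) ≤ 1 := by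
  induction m with
  | zero => simp
  | succ m ih =>
    rw [← (Fin.snocEquiv (fun _ => V)).sum_comp, Fintype.sum_prod_type_right]
    refine le_trans (Finset.sum_le_sum (fun w _ => ?_)) ih
    simp only [Fin.prod_univ_castSucc]
    have h1 : ∀ (x : V) (i : Fin m), (fun j : Fin i.castSucc.val =>
        Fin.snocEquiv (fun _ => V) (x, w) (j.castLE i.castSucc.2.le))
        = fun j : Fin i.val => w (j.castLE i.2.le) := by
      intro x i
      funext j
      exact Fin.snoc_castSucc (α := fun _ => V) x w (j.castLE i.2.le)
    have h2 : ∀ (x : V), (fun j : Fin (Fin.last m).val =>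
        Fin.snocEquiv (fun _ => V) (x, w) (j.castLE (Fin.last m).2.le)) = w := by
      intro x
      funext j
      exact Fin.snoc_castSucc (α := fun _ => V) x w j
    have h3 : ∀ (x : V) (i : Fin m), Fin.snocEquiv (fun _ => V) (x, w) i.castSucc = w i :=
      fun x i => Fin.snoc_castSucc (α := fun _ => V) x w i
    have h4 : ∀ (x : V), Fin.snocEquiv (fun _ => V) (x, w) (Fin.last m) = x :=
      fun x => Fin.snoc_last (α := fun _ => V) x w
    simp only [h3, h4]
    have h5 : ∀ x : V, (if x ∈ S (Fin.last m).val (fun j : Fin (Fin.last m).val =>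
        Fin.snocEquiv (fun _ => V) (x, w) (j.castLE (Fin.last m).2.le)) then
          ((#(S (Fin.last m).val (fun j : Fin (Fin.last m).val =>
        Fin.snocEquiv (fun _ => V) (x, w) (j.castLE (Fin.last m).2.le))) : ℝ))⁻¹ else 0)
        = if x ∈ S m w then ((#(S m w) : ℝ))⁻¹ else 0 := by
      intro x
      rw [h2]
      rfl
    have h6 : ∀ (x : V) (i : Fin m), (if w i ∈ S i.castSucc.val (fun j : Fin i.castSucc.val =>
        Fin.snocEquiv (fun _ => V) (x, w) (j.castLE i.castSucc.2.le)) then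
          ((#(S i.castSucc.val (fun j : Fin i.castSucc.val =>
        Fin.snocEquiv (fun _ => V) (x, w) (j.castLE i.castSucc.2.le))) : ℝ))⁻¹ else 0)
        = if w i ∈ S i.val (fun j => w (j.castLE i.2.le)) then
          ((#(S i.val (fun j => w (j.castLE i.2.le))) : ℝ))⁻¹ else 0 := by
      intro x i
      rw [h1]
      rfl
    simp only [h5, h6]
    rw [← Finset.mul_sum]
    refine mul_le_of_le_one_right (Finset.prod_nonneg fun i _ => ?_) ?_
    · split_ifs <;> positivity
    · rw [← Finset.sum_filter]
      simp only [Finset.filter_mem_eq_inter, Finset.univ_inter, Finset.sum_const, nsmul_eq_mul]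
      exact mul_inv_le_one

/-- predicate counted by `nq` at index `i+1`. -/
def PP {V : Type} (G : SimpleGraph V) (k : ℕ) (z : ℕ → V) (i : ℕ) (x : V) : Prop :=
  if i = 0 then True
  else if i = 1 then G.Adj (z 0) x
  else if i = 2 then G.Adj (z 0) x ∧ ¬ G.Adj (z 1) x
  else if i + 1 < k then IsInducedPath G (i+1) (extSeq z (i+1) x)
  else IsInducedCycle G k (extSeq z k x)

lemma nq_eq {V : Type} [Fintype V] (G : SimpleGraph V) (k : ℕ) (z : ℕ → V) (i : ℕ) :
    nq G k z (i+1) = #(univ.filter (PP G k z i)) := by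
  have : nq G k z (i+1) = Nat.card {x : V // PP G k z i x} := by
    unfold nq PP
    by_cases h0 : i = 0
    · simp [h0]
    by_cases h1 : i = 1
    · simp [h1]
    by_cases h2 : i = 2
    · simp [h2]
    by_cases h3 : i + 1 < k
    · simp [h0, h1, h2, h3]
    · simp [h0, h1, h2, h3]
  rw [this, Nat.card_eq_fintype_card, Fintype.card_subtype]

lemma path_congr {V : Type} (G : SimpleGraph V) (m : ℕ) (y y' : ℕ → V)
    (h : ∀ p < m, y p = y' p) (H : IsInducedPath G m y) : IsInducedPath G m y' := by
  refine ⟨fun i hi j hj => ?_, fun i hi j hj => ?_⟩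
  · rw [← h i hi, ← h j hj]; exact H.1 i hi j hj
  · rw [← h i hi, ← h j hj]; exact H.2 i hi j hj

lemma cycle_congr {V : Type} (G : SimpleGraph V) (m : ℕ) (y y' : ℕ → V)
    (h : ∀ p < m, y p = y' p) (H : IsInducedCycle G m y) : IsInducedCycle G m y' := by
  refine ⟨fun i hi j hj => ?_, fun i hi j hj => ?_⟩
  · rw [← h i hi, ← h j hj]; exact H.1 i hi j hj
  · rw [← h i hi, ← h j hj]; exact H.2 i hi j hj

lemma ext_congr {V : Type} (z z' : ℕ → V) (i : ℕ) (hi : 2 ≤ i) (x : V)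
    (h : ∀ j < i, z j = z' j) : ∀ p < i + 1, extSeq z (i+1) x p = extSeq z' (i+1) x p := by
  intro p hp
  unfold extSeq
  split_ifs with h1
  · rfl
  · apply h
    unfold swap01
    split_ifs <;> omega

lemma PP_imp {V : Type} (G : SimpleGraph V) (k : ℕ) (z z' : ℕ → V) (i : ℕ) (hi : i < k) (x : V)
    (h : ∀ j < i, z j = z' j) (H : PP G k z i x) : PP G k z' i x := by
  unfold PP at *
  split_ifs at * with h0 h1 h2 h3
  · rwa [← h 0 (by omega)]
  · rwa [← h 0 (by omega), ← h 1 (by omega)]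
  · exact path_congr G _ _ _ (ext_congr z z' i (by omega) x h) H
  · obtain rfl : k = i + 1 := by omega
    exact cycle_congr G _ _ _ (ext_congr z z' i (by omega) x h) H

lemma PP_good {V : Type} (G : SimpleGraph V) (k : ℕ) (hk : 5 ≤ k) (z : ℕ → V) (i : ℕ) (hi : i < k)
    (H : IsGoodTuple G k z) : PP G k z i (z i) := by
  have e : 2 ≤ i → ∀ p < i + 1, z (swap01 p) = extSeq z (i+1) (z i) p := by
    intro h2 p hp
    unfold extSeq
    split_ifs with h
    · congr 1
      unfold swap01
      split_ifs <;> omega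
    · rfl
  have m1 : (1 + 1) % k = 2 := Nat.mod_eq_of_lt (by omega)
  have m0 : (0 + 1) % k = 1 := Nat.mod_eq_of_lt (by omega)
  have m2 : (2 + 1) % k = 3 := Nat.mod_eq_of_lt (by omega)
  unfold PP
  split_ifs with h0 h1 h2 h3
  · subst h1
    have := H.2 1 (by omega) 0 (by omega)
    exact this.2 (Or.inr m0)
  · subst h2
    constructor
    · have := H.2 1 (by omega) 2 (by omega)
      exact this.2 (Or.inl m1)
    · have := H.2 0 (by omega) 2 (by omega)
      intro h
      have := this.1 h
      omega
  · refine path_congr G _ _ _ (e (by omega)) ⟨fun a ha b hb => H.1 a (by omega) b (by omega),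
      fun a ha b hb => ?_⟩
    have := H.2 a (by omega) b (by omega)
    rw [Nat.mod_eq_of_lt (show a + 1 < k by omega), Nat.mod_eq_of_lt (show b + 1 < k by omega)]
      at this
    exact this
  · obtain rfl : k = i + 1 := by omega
    exact cycle_congr G _ _ _ (e (by omega)) H

/-- Lemma 1: For a graph `G` on `n` vertices and `k ≥ 5`, the sum of the
weights `w(D)` over all good `k`-tuples `D` of vertices of `G` is at most `1`. -/
theorem sum_weights_le_one {V : Type} [Fintype V] (G : SimpleGraph V) (n k : ℕ)
    (hn : Fintype.card V = n) (hk : 5 ≤ k) :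
    ∑ z ∈ Finset.univ.filter (fun z : Fin k → V => IsGoodTuple G k (tupFun (by omega) z)),
        wt G k (tupFun (by omega) z) ≤ 1 := by
  rcases isEmpty_or_nonempty V with hV | ⟨⟨v0⟩⟩
  · haveI : Nonempty (Fin k) := ⟨⟨0, by omega⟩⟩
    simp
  have hk0 : 0 < k := by omega
  let S : ∀ i : ℕ, (Fin i → V) → Finset V := fun i w =>
    univ.filter (PP G k (fun j => if h : j < i then w ⟨j, h⟩ else v0) i)
  have hS : ∀ (z : Fin k → V) (i : Fin k), S i (fun j => z (j.castLE i.2.le))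
      = univ.filter (PP G k (tupFun hk0 z) i) := by
    intro z i
    have hz : ∀ j < i.val, (if h : j < i.val then z ((⟨j, h⟩ : Fin i.val).castLE i.2.le) else v0)
        = tupFun hk0 z j := by
      intro j hj
      rw [dif_pos hj]
      unfold tupFun
      congr 1
      apply Fin.ext
      exact (Nat.mod_eq_of_lt (hj.trans i.2)).symm
    ext x
    simp only [S, Finset.mem_filter, Finset.mem_univ, true_and]
    exact ⟨PP_imp G k _ _ i i.2 x hz, PP_imp G k _ _ i i.2 x (fun j hj => (hz j hj).symm)⟩
  refine le_trans ?_ (gen_aux S k)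
  refine le_trans (Finset.sum_le_sum (fun z hz => ?_))
    (Finset.sum_le_sum_of_subset_of_nonneg (Finset.filter_subset _ _) ?_)
  · simp only [Finset.mem_filter, Finset.mem_univ, true_and] at hz
    have hw : wt G k (tupFun hk0 z) = ∏ i : Fin k, ((nq G k (tupFun hk0 z) (i + 1) : ℝ))⁻¹ := by
      unfold wt
      rw [Fin.prod_univ_eq_prod_range (fun i => ((nq G k (tupFun hk0 z) (i + 1) : ℝ))⁻¹) k,
        Finset.range_eq_Ico, Finset.prod_Ico_add' (fun i => ((nq G k (tupFun hk0 z) i : ℝ))⁻¹)]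
      rfl
    rw [hw]
    refine le_of_eq (Finset.prod_congr rfl fun i _ => ?_)
    rw [hS, nq_eq, if_pos]
    simp only [Finset.mem_filter, Finset.mem_univ, true_and]
    have := PP_good G k hk (tupFun hk0 z) i i.2 hz
    have e : tupFun hk0 z i = z i := by
      unfold tupFun
      congr 1
      apply Fin.ext
      exact Nat.mod_eq_of_lt i.2
    rwa [e] at this
  · intro z _ _
    refine Finset.prod_nonneg fun i _ => ?_
    split_ifs <;> positivity
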